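/- Let F = C((t)), O = C[[t]], M < N. Every GL_M(O) ⋉ U⁻_{M,N}(F)-orbit on the affine Grassmannian Gr_N = GL_N(F)/GL_N(O) contains a representative of the form L_{(λ,(θ,θ'))}, the block matrix with upper-left (M+1)×(M+1) block equal to L_{(λ,θ)} (diagonal t^{λ_i+θ_i}, last row t^{θ_i}) and lower-right diagonal block diag(t^{θ'_1}, ..., t^{θ'_{N-M-1}}), where (λ,θ) is a dominant weight of length (M, M+1) and θ' is an arbitrary integer sequence of length N-M-1; moreover this representative is unique. -/

import Mathlib

/- Common setup: `F = ℂ((t))` the field of formal Laurent series, `O = ℂ[[t]]` its ring of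
integers (elements with no negative coefficients), `tpow k = t^k`.  `InGLO A` says that the
square matrix `A` lies in `GL(O)`, i.e. both `A` and an inverse of `A` have entries in `O`. -/

noncomputable section

abbrev F : Type := LaurentSeries ℂ

/-- `t^k` for `k : ℤ`, where `t` is the uniformizer of `ℂ((t))`. -/
noncomputable def tpow (k : ℤ) : F := (HahnSeries.single (1 : ℤ) (1 : ℂ) : F) ^ k

/-- The ring of integers `O = ℂ[[t]] ⊆ ℂ((t))`. -/
def Oint : Set F := {f : F | ∀ m : ℤ, m < 0 → f.coeff m = 0}

/-- `A ∈ GL_n(O)`. -/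
def InGLO {n : ℕ} (A : Matrix (Fin n) (Fin n) F) : Prop :=
  ∃ B : Matrix (Fin n) (Fin n) F,
    (∀ i j, A i j ∈ Oint) ∧ (∀ i j, B i j ∈ Oint) ∧ A * B = 1 ∧ B * A = 1

/-- Block-diagonal embedding of an `M×M` matrix into the top-left corner of an `n×n`
matrix, with `1`'s on the rest of the diagonal. -/
noncomputable def embTop (M n : ℕ) (g : Matrix (Fin M) (Fin M) F) :
    Matrix (Fin n) (Fin n) F := fun i j =>
  if hi : (i : ℕ) < M then
    (if hj : (j : ℕ) < M then g ⟨i, hi⟩ ⟨j, hj⟩ else 0)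
  else (if (i : ℕ) = (j : ℕ) then 1 else 0)

/-- `u ∈ U⁻_{M,N}(F)`, the unipotent radical of the negative parabolic of type
`(M+1,1,…,1)` in `GL_N`: identity diagonal, and (0-based) the only nonzero off-diagonal
entries are in rows `i ≥ M+1` and columns `j < i`. -/
def InUminus (M : ℕ) {n : ℕ} (u : Matrix (Fin n) (Fin n) F) : Prop :=
  (∀ i, u i i = 1) ∧
  ∀ i j : Fin n, i ≠ j → ((i : ℕ) ≤ M ∨ (i : ℕ) ≤ (j : ℕ)) → u i j = 0

/-- The representative `L_{(λ,(θ,θ'))} ∈ GL_N(F)`, `N = M+1+K`: the upper-left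
`(M+1)×(M+1)` block has diagonal `t^{λ_i+θ_i}` (`i ≤ M`) and last row
`(t^{θ_1},…,t^{θ_{M+1}})`, and the lower-right block is `diag(t^{θ'_1},…,t^{θ'_K})`. -/
noncomputable def LmatN (M K : ℕ) (lam : Fin M → ℤ) (th : Fin (M + 1) → ℤ)
    (th' : Fin K → ℤ) : Matrix (Fin (M + 1 + K)) (Fin (M + 1 + K)) F := fun i j =>
  if hi : (i : ℕ) < M then
    (if (i : ℕ) = (j : ℕ) then tpow (lam ⟨i, hi⟩ + th ⟨i, by omega⟩) else 0)
  else if hi2 : (i : ℕ) = M then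
    (if hj : (j : ℕ) < M + 1 then tpow (th ⟨j, hj⟩) else 0)
  else if (i : ℕ) = (j : ℕ) then
    tpow (th' ⟨(i : ℕ) - (M + 1), by have := i.isLt; omega⟩)
  else 0

/-- the valuation on `F` -/
def vF : AddValuation F (WithTop ℤ) := HahnSeries.addVal ℤ ℂ

lemma mem_Oint {f : F} : f ∈ Oint ↔ 0 ≤ vF f := by
  unfold vF
  rw [HahnSeries.addVal_apply, HahnSeries.le_orderTop_iff_forall]
  constructor
  · intro h j hj
    exact h j (by exact_mod_cast hj)
  · intro h j hj
    exact h j (by exact_mod_cast hj)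

lemma t_ne_zero : (HahnSeries.single (1 : ℤ) (1 : ℂ) : F) ≠ 0 := by
  simp

lemma tpow_ne_zero (k : ℤ) : tpow k ≠ 0 := zpow_ne_zero _ t_ne_zero

lemma tpow_add (k l : ℤ) : tpow (k + l) = tpow k * tpow l := zpow_add₀ t_ne_zero _ _

lemma tpow_zero : tpow 0 = 1 := zpow_zero _

lemma tpow_neg_mul (k : ℤ) : tpow (-k) * tpow k = 1 := by
  rw [← tpow_add]; simp [tpow_zero]

lemma vF_tpow_nat (k : ℕ) : vF (tpow k) = ((k : ℤ) : WithTop ℤ) := by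
  have h : tpow k = HahnSeries.single (k : ℤ) (1 : ℂ) := by
    unfold tpow
    simp [zpow_natCast, HahnSeries.single_pow]
  rw [h]
  unfold vF
  rw [HahnSeries.addVal_apply, HahnSeries.orderTop_single one_ne_zero]

lemma vF_tpow (k : ℤ) : vF (tpow k) = (k : WithTop ℤ) := by
  obtain ⟨n, rfl | rfl⟩ := k.eq_nat_or_neg
  · exact vF_tpow_nat n
  · have h := congrArg vF (tpow_neg_mul n)
    rw [AddValuation.map_mul, vF_tpow_nat, AddValuation.map_one] at h
    cases hz : vF (tpow (-(n : ℤ))) with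
    | top => rw [hz] at h; simp at h
    | coe m =>
      rw [hz] at h
      norm_cast at h ⊢
      omega

lemma vF_top {x : F} : vF x = ⊤ ↔ x = 0 := by
  unfold vF; rw [HahnSeries.addVal_apply]; simp

lemma exists_unit {x : F} (hx : x ≠ 0) : ∃ (k : ℤ) (u : F), vF u = 0 ∧ x = tpow k * u ∧
    vF x = (k : WithTop ℤ) := by
  obtain ⟨k, hk⟩ := WithTop.ne_top_iff_exists.1 (mt vF_top.1 hx)
  refine ⟨k, tpow (-k) * x, ?_, ?_, hk.symm⟩
  · rw [AddValuation.map_mul, vF_tpow, ← hk]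
    norm_cast
    simp
  · rw [← mul_assoc, ← tpow_add]; simp [tpow_zero]

lemma div_mem_O {x y : F} (h : vF y ≤ vF x) : x / y ∈ Oint := by
  rw [mem_Oint]
  by_cases hy : y = 0
  · subst hy; simp
  · obtain ⟨z, rfl⟩ : ∃ z, x = y * z := ⟨x / y, by field_simp⟩
    obtain ⟨k, u, hu, -, hk⟩ := exists_unit hy
    rw [mul_div_cancel_left₀ _ hy]
    rw [AddValuation.map_mul, hk] at h
    cases hz : vF z with
    | top => simp
    | coe m =>
      rw [hz] at h
      norm_cast at h ⊢
      omega

lemma vF_inv_unit {u : F} (hu : vF u = 0) : vF u⁻¹ = 0 := by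
  have hu0 : u ≠ 0 := by
    rintro rfl; simp at hu
  have h : vF (u * u⁻¹) = 0 := by rw [mul_inv_cancel₀ hu0]; simp
  rwa [AddValuation.map_mul, hu, zero_add] at h

lemma unit_ne_zero {u : F} (hu : vF u = 0) : u ≠ 0 := by
  rintro rfl; simp at hu

/-- `O` as a subring -/
def OS : Subring F where
  carrier := Oint
  mul_mem' := by
    intro a b ha hb
    rw [mem_Oint] at *
    rw [AddValuation.map_mul]
    exact add_nonneg ha hb
  one_mem' := by rw [mem_Oint]; simp
  add_mem' := by
    intro a b ha hb
    rw [mem_Oint] at *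
    exact le_trans (le_min ha hb) (AddValuation.map_add _ _ _)
  zero_mem' := by rw [mem_Oint]; simp
  neg_mem' := by
    intro a ha
    rw [mem_Oint] at *
    rwa [AddValuation.map_neg]

lemma mem_OS {f : F} : f ∈ OS ↔ f ∈ Oint := Iff.rfl

/-- integral matrices -/
def IntM {m n : Type*} (A : Matrix m n F) : Prop := ∀ i j, A i j ∈ OS

lemma IntM.det {n : ℕ} {A : Matrix (Fin n) (Fin n) F} (h : IntM A) : A.det ∈ OS := by
  rw [Matrix.det_apply]
  refine Subring.sum_mem _ fun σ _ => ?_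
  rw [Units.smul_def]
  exact zsmul_mem (Subring.prod_mem _ fun i _ => h _ _) _

lemma IntM.mul {l m n : ℕ} {A : Matrix (Fin l) (Fin m) F} {B : Matrix (Fin m) (Fin n) F}
    (hA : IntM A) (hB : IntM B) : IntM (A * B) := by
  intro i j
  rw [Matrix.mul_apply]
  exact Subring.sum_mem _ fun k _ => mul_mem (hA _ _) (hB _ _)

lemma IntM.adj {n : ℕ} {A : Matrix (Fin n) (Fin n) F} (h : IntM A) : IntM A.adjugate := by
  intro i j
  rw [Matrix.adjugate_apply]
  refine IntM.det fun k l => ?_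
  rw [Matrix.updateRow_apply]
  split_ifs
  · rw [Pi.single_apply]; split_ifs
    · exact one_mem _
    · exact zero_mem _
  · exact h _ _

lemma InGLO_iff {n : ℕ} {A : Matrix (Fin n) (Fin n) F} :
    InGLO A ↔ IntM A ∧ vF A.det = 0 := by
  constructor
  · rintro ⟨B, hA, hB, h1, -⟩
    refine ⟨hA, ?_⟩
    have hd : A.det * B.det = 1 := by rw [← Matrix.det_mul, h1, Matrix.det_one]
    have h := congrArg vF hd
    have ha := mem_Oint.1 (mem_OS.1 (IntM.det hA))
    have hb := mem_Oint.1 (mem_OS.1 (IntM.det hB))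
    rw [AddValuation.map_mul, AddValuation.map_one] at h
    refine le_antisymm ?_ ha
    rw [← h]
    exact le_add_of_nonneg_right hb
  · rintro ⟨hA, hd⟩
    have h0 := unit_ne_zero hd
    have hu : IsUnit A.det := h0.isUnit
    refine ⟨A⁻¹, hA, ?_, Matrix.mul_nonsing_inv _ hu, Matrix.nonsing_inv_mul _ hu⟩
    intro i j
    rw [Matrix.inv_def, Matrix.smul_apply, smul_eq_mul, Ring.inverse_eq_inv']
    exact mul_mem (S := Subring F) (s := OS)
        (mem_OS.2 (mem_Oint.2 (vF_inv_unit hd).ge)) (hA.adj i j)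

lemma InGLO.mul {n : ℕ} {A B : Matrix (Fin n) (Fin n) F} (hA : InGLO A) (hB : InGLO B) :
    InGLO (A * B) := by
  rw [InGLO_iff] at *
  refine ⟨hA.1.mul hB.1, ?_⟩
  rw [Matrix.det_mul, AddValuation.map_mul, hA.2, hB.2, add_zero]

lemma InGLO.inv {n : ℕ} {A : Matrix (Fin n) (Fin n) F} (hA : InGLO A) :
    ∃ B, InGLO B ∧ A * B = 1 ∧ B * A = 1 := by
  obtain ⟨B, h1, h2, h3, h4⟩ := hA
  exact ⟨B, ⟨A, h2, h1, h4, h3⟩, h3, h4⟩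

lemma InGLO.one {n : ℕ} : InGLO (1 : Matrix (Fin n) (Fin n) F) := by
  rw [InGLO_iff]
  refine ⟨fun i j => ?_, by simp⟩
  rw [Matrix.one_apply]; split_ifs
  · exact one_mem _
  · exact zero_mem _

lemma InGLO.lower {n : ℕ} {A : Matrix (Fin n) (Fin n) F} (hA : IntM A)
    (hl : ∀ i j, i < j → A i j = 0) (hd : ∀ i, A i i = 1) : InGLO A := by
  rw [InGLO_iff]
  refine ⟨hA, ?_⟩
  rw [Matrix.det_of_isLowerTriangular A (fun i j h => hl i j h)]
  simp [hd]

lemma InGLO.upper {n : ℕ} {A : Matrix (Fin n) (Fin n) F} (hA : IntM A)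
    (hl : ∀ i j, j < i → A i j = 0) (hd : ∀ i, A i i = 1) : InGLO A := by
  rw [InGLO_iff]
  refine ⟨hA, ?_⟩
  rw [Matrix.det_of_isUpperTriangular (M := A) (fun i j h => hl i j h)]
  simp [hd]

lemma InGLO.diag {n : ℕ} {d : Fin n → F} (hd : ∀ i, vF (d i) = 0) :
    InGLO (Matrix.diagonal d) := by
  rw [InGLO_iff]
  constructor
  · intro i j
    rw [Matrix.diagonal_apply]; split_ifs
    · exact mem_OS.2 (mem_Oint.2 (hd _).ge)
    · exact zero_mem _
  · rw [Matrix.det_diagonal]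
    refine Finset.prod_induction _ (fun x => vF x = 0) ?_ (by simp) (by simp [hd])
    intro a b ha hb
    rw [AddValuation.map_mul, ha, hb, add_zero]

lemma InGLO.perm {n : ℕ} (σ : Equiv.Perm (Fin n)) :
    InGLO ((1 : Matrix (Fin n) (Fin n) F).submatrix σ id) := by
  rw [InGLO_iff]
  constructor
  · intro i j
    exact (InGLO_iff.1 InGLO.one).1 _ _
  · rw [Matrix.det_permute]
    rcases Int.units_eq_one_or (Equiv.Perm.sign σ) with h | h <;> simp [h]

lemma InGLO.permcol {n : ℕ} (σ : Equiv.Perm (Fin n)) (A : Matrix (Fin n) (Fin n) F) :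
    ∃ C, InGLO C ∧ A * C = A.submatrix id σ := by
  refine ⟨(1 : Matrix (Fin n) (Fin n) F).submatrix σ.symm id, InGLO.perm _, ?_⟩
  rw [Matrix.mul_submatrix_one]
  rfl

lemma InGLO.permrow {n : ℕ} (σ : Equiv.Perm (Fin n)) (A : Matrix (Fin n) (Fin n) F) :
    ∃ C, InGLO C ∧ C * A = A.submatrix σ id := by
  refine ⟨(1 : Matrix (Fin n) (Fin n) F).submatrix σ id, InGLO.perm _, ?_⟩
  have := Matrix.one_submatrix_mul (σ : Fin n → Fin n) (Equiv.refl _) A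
  simpa using this

/-- column elimination -/
lemma InGLO.elimcol {n : ℕ} (r : Fin n) (c : Fin n → F) (hc : ∀ j, c j ∈ OS)
    (h0 : ∀ j, j ≤ r → c j = 0) (A : Matrix (Fin n) (Fin n) F) :
    ∃ C : Matrix (Fin n) (Fin n) F, InGLO C ∧ ∀ i j, (A * C) i j = A i j - A i r * c j := by
  refine ⟨1 - Matrix.vecMulVec (Pi.single r 1) c, InGLO.upper ?_ ?_ ?_, ?_⟩
  · intro i j
    refine sub_mem ((InGLO_iff.1 InGLO.one).1 _ _) ?_
    rw [Matrix.vecMulVec_apply, Pi.single_apply]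
    split_ifs
    · simpa using hc j
    · simp
  · intro i j hij
    rw [Matrix.sub_apply, Matrix.vecMulVec_apply, Pi.single_apply, Matrix.one_apply_ne hij.ne']
    split_ifs with h
    · rw [h0 j (h ▸ hij.le)]; simp
    · simp
  · intro i
    rw [Matrix.sub_apply, Matrix.vecMulVec_apply, Pi.single_apply, Matrix.one_apply_eq]
    split_ifs with h
    · rw [h0 i h.le]; simp
    · simp
  · intro i j
    rw [Matrix.mul_sub, Matrix.mul_one, Matrix.sub_apply, Matrix.mul_vecMulVec,
      Matrix.vecMulVec_apply]
    simp

lemma InGLO.transpose {n : ℕ} {A : Matrix (Fin n) (Fin n) F} (hA : InGLO A) :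
    InGLO A.transpose := by
  rw [InGLO_iff] at *
  exact ⟨fun i j => hA.1 j i, by rw [Matrix.det_transpose]; exact hA.2⟩

lemma InGLO.elimrow {n : ℕ} (r : Fin n) (c : Fin n → F) (hc : ∀ j, c j ∈ OS)
    (h0 : ∀ j, j ≤ r → c j = 0) (A : Matrix (Fin n) (Fin n) F) :
    ∃ C : Matrix (Fin n) (Fin n) F, InGLO C ∧ ∀ i j, (C * A) i j = A i j - c i * A r j := by
  obtain ⟨C, hC, h⟩ := InGLO.elimcol r c hc h0 A.transpose
  refine ⟨C.transpose, hC.transpose, fun i j => ?_⟩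
  have := h j i
  rw [← Matrix.transpose_apply (A.transpose * C), Matrix.transpose_mul,
    Matrix.transpose_transpose] at this
  rw [this, Matrix.transpose_apply, Matrix.transpose_apply, mul_comm (c i)]

lemma exists_lower {n : ℕ} (A : Matrix (Fin n) (Fin n) F) (r : ℕ) :
    ∃ C : Matrix (Fin n) (Fin n) F, InGLO C ∧ ∀ i j : Fin n, (i : ℕ) < r → i < j → (A * C) i j = 0 := by
  induction r with
  | zero => exact ⟨1, InGLO.one, fun i j h => by omega⟩
  | succ r ih =>
    obtain ⟨C, hC, h⟩ := ih
    by_cases hr : r < n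
    swap
    · exact ⟨C, hC, fun i j hi hij => h i j (by omega) hij⟩
    set R : Fin n := ⟨r, hr⟩ with hR
    set B := A * C with hB
    obtain ⟨j0, hj0, hmin⟩ := Finset.exists_min_image (Finset.univ.filter fun j => R ≤ j)
      (fun j => vF (B R j)) ⟨R, by simp⟩
    simp only [Finset.mem_filter, Finset.mem_univ, true_and] at hj0 hmin
    obtain ⟨C1, hC1, h1⟩ := InGLO.permcol (Equiv.swap R j0) B
    set B1 := B * C1 with hB1
    have hmin1 : ∀ j, R ≤ j → vF (B1 R R) ≤ vF (B1 R j) := by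
      intro j hj
      rw [h1]
      simp only [Matrix.submatrix_apply, id, Equiv.swap_apply_left]
      apply hmin
      rw [Equiv.swap_apply_def]
      split_ifs
      · exact hj0
      · exact le_rfl
      · exact hj
    have hz1 : ∀ i j : Fin n, (i : ℕ) < r → i < j → B1 i j = 0 := by
      intro i j hi hij
      rw [h1]
      simp only [Matrix.submatrix_apply, id]
      apply h _ _ hi
      have hiR : i < R := hi
      rw [Equiv.swap_apply_def]
      split_ifs
      · exact lt_of_lt_of_le hiR hj0
      · exact hiR
      · exact hij
    obtain ⟨C2, hC2, h2⟩ := InGLO.elimcol R (fun j => if R < j then B1 R j / B1 R R else 0)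
      (by
        intro j
        split_ifs with hj
        · exact div_mem_O (hmin1 j hj.le)
        · exact zero_mem _) (by
        intro j hj
        rw [if_neg (not_lt.2 hj)]) B1
    refine ⟨C * (C1 * C2), hC.mul (hC1.mul hC2), ?_⟩
    intro i j hi hij
    rw [← Matrix.mul_assoc, ← Matrix.mul_assoc, ← hB, ← hB1, h2]
    rcases Nat.lt_succ_iff_lt_or_eq.1 hi with hi' | hi'
    · rw [hz1 i j hi' hij, hz1 i R hi' hi']; simp
    · obtain rfl : i = R := Fin.ext hi'
      rw [if_pos hij]
      by_cases h0 : B1 R R = 0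
      · have := hmin1 j hij.le
        rw [h0] at this
        simp only [AddValuation.map_zero, top_le_iff] at this
        rw [vF_top.1 this]; simp
      · field_simp; simp

lemma exists_diag {n : ℕ} (A : Matrix (Fin n) (Fin n) F) (r : ℕ) :
    ∃ G C : Matrix (Fin n) (Fin n) F, InGLO G ∧ InGLO C ∧
      ∀ i j : Fin n, ((i : ℕ) < r ∨ (j : ℕ) < r) → i ≠ j → (G * A * C) i j = 0 := by
  induction r with
  | zero => exact ⟨1, 1, InGLO.one, InGLO.one, fun i j h => by omega⟩
  | succ r ih =>
    obtain ⟨G, C, hG, hC, h⟩ := ih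
    by_cases hr : r < n
    swap
    · exact ⟨G, C, hG, hC, fun i j hi hij => h i j (by omega) hij⟩
    set R : Fin n := ⟨r, hr⟩ with hR
    set B := G * A * C with hB
    obtain ⟨⟨i0, j0⟩, hj0, hmin⟩ := Finset.exists_min_image
      (Finset.univ.filter fun p : Fin n × Fin n => R ≤ p.1 ∧ R ≤ p.2)
      (fun p => vF (B p.1 p.2)) ⟨(R, R), by simp⟩
    simp only [Finset.mem_filter, Finset.mem_univ, true_and, Prod.forall] at hj0 hmin
    obtain ⟨C1, hC1, h1⟩ := InGLO.permcol (Equiv.swap R j0) B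
    obtain ⟨G1, hG1, h1'⟩ := InGLO.permrow (Equiv.swap R i0) (B * C1)
    set B1 := G1 * (B * C1) with hB1
    have hsw : ∀ k j : Fin n, R ≤ k → R ≤ j → R ≤ Equiv.swap R k j := by
      intro k j hk hj
      rw [Equiv.swap_apply_def]
      split_ifs
      · exact hk
      · exact le_rfl
      · exact hj
    have hsw' : ∀ k j : Fin n, R ≤ k → (j : ℕ) < r → Equiv.swap R k j = j := by
      intro k j hk hj
      have hj : j < R := hj
      exact Equiv.swap_apply_of_ne_of_ne hj.ne (lt_of_lt_of_le hj hk).ne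
    have hB1a : ∀ i j, B1 i j = B (Equiv.swap R i0 i) (Equiv.swap R j0 j) := by
      intro i j
      rw [h1', h1]; rfl
    have hmin1 : ∀ i j, R ≤ i → R ≤ j → vF (B1 R R) ≤ vF (B1 i j) := by
      intro i j hi hj
      rw [hB1a, hB1a, Equiv.swap_apply_left, Equiv.swap_apply_left]
      exact hmin _ _ ⟨hsw _ _ hj0.1 hi, hsw _ _ hj0.2 hj⟩
    have hz1 : ∀ i j : Fin n, ((i : ℕ) < r ∨ (j : ℕ) < r) → i ≠ j → B1 i j = 0 := by
      intro i j hi hij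
      rw [hB1a]
      rcases hi with hi | hj
      · rw [hsw' _ _ hj0.1 hi]
        refine h _ _ (Or.inl hi) ?_
        intro he
        rw [← hsw' j0 i hj0.2 hi] at he
        exact hij ((Equiv.swap R j0).injective he)
      · rw [hsw' _ _ hj0.2 hj]
        refine h _ _ (Or.inr hj) ?_
        intro he
        rw [← hsw' i0 j hj0.1 hj] at he
        exact hij ((Equiv.swap R i0).injective he)
    obtain ⟨C2, hC2, h2⟩ := InGLO.elimcol R (fun j => if R < j then B1 R j / B1 R R else 0)
      (by
        intro j
        split_ifs with hj
        · exact div_mem_O (hmin1 R j le_rfl hj.le)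
        · exact zero_mem _) (by
        intro j hj
        rw [if_neg (not_lt.2 hj)]) B1
    obtain ⟨G2, hG2, h2'⟩ := InGLO.elimrow R (fun j => if R < j then B1 j R / B1 R R else 0)
      (by
        intro j
        split_ifs with hj
        · exact div_mem_O (hmin1 j R hj.le le_rfl)
        · exact zero_mem _) (by
        intro j hj
        rw [if_neg (not_lt.2 hj)]) (B1 * C2)
    refine ⟨G2 * (G1 * G), C * (C1 * C2), hG2.mul (hG1.mul hG), hC.mul (hC1.mul hC2), ?_⟩
    intro i j hi hij
    have he : G2 * (G1 * G) * A * (C * (C1 * C2)) = G2 * (B1 * C2) := by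
      rw [hB1, hB]; simp only [Matrix.mul_assoc]
    rw [he, h2', h2, h2]
    have hdiv : ∀ i j, R ≤ i → R ≤ j → B1 R R * (B1 i j / B1 R R) = B1 i j := by
      intro i j hi hj
      by_cases h0 : B1 R R = 0
      · have := hmin1 i j hi hj
        rw [h0] at this
        simp only [AddValuation.map_zero, top_le_iff] at this
        rw [vF_top.1 this]; simp
      · field_simp
    rcases lt_trichotomy i R with hi' | rfl | hi'
    · rw [hz1 i j (Or.inl hi') hij, hz1 i R (Or.inl hi') hi'.ne, if_neg hi'.not_gt]; simp
    · rcases lt_trichotomy j R with hj' | rfl | hj'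
      · rw [hz1 R j (Or.inr hj') hij, if_neg hj'.not_gt]; simp
      · exact absurd rfl hij
      · rw [if_pos hj', hdiv R j le_rfl hj'.le]; simp
    · rcases lt_trichotomy j R with hj' | rfl | hj'
      · rw [hz1 i j (Or.inr hj') hij, if_neg hj'.not_gt, hz1 R j (Or.inr hj') hj'.ne']; simp
      · rw [if_pos hi', if_neg (lt_irrefl _)]
        have := hdiv i R hi'.le le_rfl
        simp only [mul_zero, sub_zero]
        rw [mul_comm, this, sub_self]
      · have hi'' : r < (i : ℕ) := hi'
        have hj'' : r < (j : ℕ) := hj'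
        omega

/-- Smith normal form -/
lemma exists_smith {n : ℕ} (A : Matrix (Fin n) (Fin n) F) (hA : A.det ≠ 0) :
    ∃ G C : Matrix (Fin n) (Fin n) F, ∃ a : Fin n → ℤ, InGLO G ∧ InGLO C ∧ Monotone a ∧
      G * A * C = Matrix.diagonal fun i => tpow (a i) := by
  obtain ⟨G, C, hG, hC, h⟩ := exists_diag A n
  set B := G * A * C with hB
  have hBd : B = Matrix.diagonal fun i => B i i := by
    ext i j
    by_cases hij : i = j
    · subst hij; simp
    · rw [Matrix.diagonal_apply_ne _ hij, h i j (Or.inl i.2) hij]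
  have hdet : B.det ≠ 0 := by
    rw [hB, Matrix.det_mul, Matrix.det_mul]
    exact mul_ne_zero (mul_ne_zero (unit_ne_zero (InGLO_iff.1 hG).2) hA)
      (unit_ne_zero (InGLO_iff.1 hC).2)
  have hne : ∀ i, B i i ≠ 0 := by
    rw [hBd, Matrix.det_diagonal, Finset.prod_ne_zero_iff] at hdet
    intro i; exact hdet i (Finset.mem_univ _)
  choose k u hu hk _ using fun i => exists_unit (hne i)
  have h1 : B * Matrix.diagonal (fun i => (u i)⁻¹) = Matrix.diagonal fun i => tpow (k i) := by
    rw [hBd, Matrix.diagonal_mul_diagonal]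
    congr 1
    ext1 i
    rw [hk i, mul_assoc, mul_inv_cancel₀ (unit_ne_zero (hu i)), mul_one]
  have hC1 : InGLO (Matrix.diagonal (fun i => (u i)⁻¹)) := InGLO.diag fun i => vF_inv_unit (hu i)
  set C1 := Matrix.diagonal (fun i => (u i)⁻¹)
  obtain ⟨C2, hC2, h2⟩ := InGLO.permcol (Tuple.sort k) (B * C1)
  obtain ⟨G2, hG2, h3⟩ := InGLO.permrow (Tuple.sort k) (B * C1 * C2)
  refine ⟨G2 * G, C * (C1 * C2), k ∘ Tuple.sort k, hG2.mul hG, hC.mul (hC1.mul hC2),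
    Tuple.monotone_sort k, ?_⟩
  have he : G2 * G * A * (C * (C1 * C2)) = G2 * (B * C1 * C2) := by
      rw [hB]; simp only [Matrix.mul_assoc]
  rw [he, h3, h2, h1]
  ext i j
  simp [Matrix.diagonal_apply]

/-- `x` can be moved to `y` without changing `diag(t^a)`. -/
def VRel {M : ℕ} (a : Fin M → ℤ) (b : ℤ) (x y : Fin M → F) : Prop :=
  ∃ (g c : Matrix (Fin M) (Fin M) F) (r : Fin M → F), InGLO g ∧ InGLO c ∧ (∀ i, r i ∈ OS) ∧
    g * (Matrix.diagonal fun i => tpow (a i)) * c = (Matrix.diagonal fun i => tpow (a i)) ∧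
    ∀ i, (Matrix.vecMul x c) i + tpow b * r i = y i

lemma VRel.trans {M : ℕ} {a : Fin M → ℤ} {b : ℤ} {x y z : Fin M → F}
    (h1 : VRel a b x y) (h2 : VRel a b y z) : VRel a b x z := by
  obtain ⟨g, c, r, hg, hc, hr, hD, h⟩ := h1
  obtain ⟨g', c', r', hg', hc', hr', hD', h'⟩ := h2
  refine ⟨g' * g, c * c', fun i => (Matrix.vecMul r c') i + r' i, hg'.mul hg, hc.mul hc', ?_, ?_, ?_⟩
  · intro i
    refine add_mem ?_ (hr' i)
    refine Subring.sum_mem _ fun k _ => mul_mem (hr k) ((InGLO_iff.1 hc').1 _ _)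
  · calc _ = g' * (g * (Matrix.diagonal fun i => tpow (a i)) * c) * c' := by
          simp only [Matrix.mul_assoc]
      _ = _ := by rw [hD, hD']
  · intro i
    rw [← h' i, ← Matrix.vecMul_vecMul]
    have : y = Matrix.vecMul x c + fun i => tpow b * r i := by
      ext1 j; rw [← h j]; rfl
    rw [this, Matrix.add_vecMul]
    have h3 : (Matrix.vecMul (fun i => tpow b * r i) c') i = tpow b * (Matrix.vecMul r c') i := by
      simp only [Matrix.vecMul, dotProduct, Finset.mul_sum, mul_assoc]
    rw [Pi.add_apply, h3]
    ring

lemma VRel.addb {M : ℕ} (a : Fin M → ℤ) (b : ℤ) (x r : Fin M → F) (hr : ∀ i, r i ∈ OS) :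
    VRel a b x (fun i => x i + tpow b * r i) :=
  ⟨1, 1, r, InGLO.one, InGLO.one, hr, by simp, by simp⟩

lemma VRel.scale {M : ℕ} (a : Fin M → ℤ) (b : ℤ) (x u : Fin M → F) (hu : ∀ i, vF (u i) = 0) :
    VRel a b x (fun i => x i * (u i)⁻¹) := by
  refine ⟨Matrix.diagonal u, Matrix.diagonal fun i => (u i)⁻¹, 0, InGLO.diag hu,
    InGLO.diag fun i => vF_inv_unit (hu i), fun i => zero_mem _, ?_, ?_⟩
  · rw [Matrix.diagonal_mul_diagonal, Matrix.diagonal_mul_diagonal]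
    congr 1
    ext1 i
    have := unit_ne_zero (hu i)
    field_simp
  · intro i
    simp [Matrix.vecMul_diagonal]

lemma VRel.unip {M : ℕ} (a : Fin M → ℤ) (b : ℤ) (x s : Fin M → F) (f : Fin M → Fin M)
    (hs : ∀ i, s i ∈ OS) (hs' : ∀ i, tpow (a (f i) - a i) * s i ∈ OS)
    (h : (∀ i, s i ≠ 0 → i < f i) ∨ (∀ i, s i ≠ 0 → f i < i)) :
    VRel a b x (fun i => x i + s i * x (f i)) := by
  set c : Matrix (Fin M) (Fin M) F := 1 + Matrix.of fun k i => if k = f i then s i else 0 with hc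
  set d : Matrix (Fin M) (Fin M) F :=
    1 + Matrix.of fun k i => if k = f i then tpow (a (f i) - a i) * s i else 0 with hd
  have hne : ∀ i, s i ≠ 0 → f i ≠ i := by
    rcases h with h | h
    · exact fun i hi => (h i hi).ne'
    · exact fun i hi => (h i hi).ne
  have key : ∀ s' : Fin M → F, (∀ i, s' i ∈ OS) → (∀ i, s' i ≠ 0 → s i ≠ 0) →
      InGLO ((1 : Matrix (Fin M) (Fin M) F) + Matrix.of fun k i => if k = f i then s' i else 0) := by
    intro s' hO hn
    have hint : IntM ((1 : Matrix (Fin M) (Fin M) F) +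
        Matrix.of fun k i => if k = f i then s' i else 0) := by
      intro i j
      refine add_mem ((InGLO_iff.1 InGLO.one).1 _ _) ?_
      rw [Matrix.of_apply]
      split_ifs
      · exact hO _
      · exact zero_mem _
    have hdiag : ∀ i, ((1 : Matrix (Fin M) (Fin M) F) +
        Matrix.of fun k i => if k = f i then s' i else 0) i i = 1 := by
      intro i
      rw [Matrix.add_apply, Matrix.one_apply_eq, Matrix.of_apply]
      split_ifs with hi
      · by_cases h0 : s' i = 0
        · rw [h0, add_zero]
        · exact absurd hi.symm (hne i (hn i h0))
      · rw [add_zero]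
    rcases h with h | h
    · refine InGLO.lower hint (fun i j hij => ?_) hdiag
      rw [Matrix.add_apply, Matrix.one_apply_ne hij.ne, Matrix.of_apply, zero_add]
      split_ifs with hi
      · by_contra h0
        have := h j (hn j h0)
        rw [← hi] at this
        exact absurd this hij.not_gt
      · rfl
    · refine InGLO.upper hint (fun i j hij => ?_) hdiag
      rw [Matrix.add_apply, Matrix.one_apply_ne hij.ne', Matrix.of_apply, zero_add]
      split_ifs with hi
      · by_contra h0
        have := h j (hn j h0)
        rw [← hi] at this
        exact absurd this hij.not_gt
      · rfl
  have hcG : InGLO c := key s hs fun i h => h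
  have hdG : InGLO d := key _ hs' fun i h => right_ne_zero_of_mul h
  obtain ⟨e, heG, he1, he2⟩ := hdG.inv
  refine ⟨e, c, 0, heG, hcG, fun i => zero_mem _, ?_, ?_⟩
  · have : Matrix.diagonal (fun i => tpow (a i)) * c = d * Matrix.diagonal (fun i => tpow (a i)) := by
      ext i j
      rw [Matrix.diagonal_mul, Matrix.mul_diagonal, hc, hd, Matrix.add_apply, Matrix.add_apply,
        Matrix.of_apply, Matrix.of_apply, Matrix.one_apply]
      by_cases h1 : i = j
      · subst h1
        by_cases h2 : i = f i
        · rw [if_pos h2, if_pos h2, ← h2]; simp [tpow_zero, mul_comm]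
        · simp [h2]
      · by_cases h2 : i = f j
        · rw [if_pos h2, if_pos h2, ← h2, if_neg h1, zero_add, zero_add]
          have : tpow (a i) = tpow (a i - a j) * tpow (a j) := by rw [← tpow_add]; simp
          rw [this]; ring
        · simp [h1, h2]
    rw [Matrix.mul_assoc, this, ← Matrix.mul_assoc, he2, Matrix.one_mul]
  · intro i
    rw [hc, Matrix.vecMul_add, Matrix.vecMul_one]
    simp [Matrix.vecMul, dotProduct, mul_comm]

lemma exists_theta {M : ℕ} (a : Fin M → ℤ) (ha : Monotone a) (b : ℤ) (x : Fin M → F) :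
    ∃ th : Fin M → ℤ, Monotone th ∧ (∀ i, th i ≤ b) ∧ Monotone (fun i => a i - th i) ∧
      VRel a b x (fun i => tpow (th i)) := by
  classical
  -- step 0
  obtain ⟨y, th0, hy, hth0, hb⟩ : ∃ (y : Fin M → F) (th0 : Fin M → ℤ), VRel a b x y ∧
      (∀ i, vF (y i) = (th0 i : WithTop ℤ)) ∧ ∀ i, th0 i ≤ b := by
    set y := fun i => x i + tpow b * (if (b : WithTop ℤ) < vF (x i) then (1 : F) else 0) with hy
    have hle : ∀ i, vF (y i) ≤ (b : WithTop ℤ) := by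
      intro i
      rw [hy]
      dsimp only
      split_ifs with h
      · rw [mul_one, AddValuation.map_add_eq_of_lt_right _ (by rwa [vF_tpow]), vF_tpow]
      · rw [mul_zero, add_zero]; exact not_lt.1 h
    choose th0 hth0 using fun i => WithTop.ne_top_iff_exists.1
      (ne_top_of_le_ne_top (WithTop.coe_ne_top) (hle i))
    refine ⟨y, th0, VRel.addb a b x _ ?_, fun i => (hth0 i).symm, ?_⟩
    · intro i
      split_ifs
      · exact one_mem _
      · exact zero_mem _
    · intro i
      have := hle i
      rw [← hth0 i] at this
      exact_mod_cast this
  -- step A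
  have hA : ∀ i, ∃ j, i ≤ j ∧ ∀ k, i ≤ k → th0 j ≤ th0 k := by
    intro i
    obtain ⟨j, hj, hmin⟩ := Finset.exists_min_image (Finset.univ.filter fun j => i ≤ j)
      th0 ⟨i, by simp⟩
    simp only [Finset.mem_filter, Finset.mem_univ, true_and] at hj hmin
    exact ⟨j, hj, hmin⟩
  choose f hf hfmin using hA
  obtain ⟨z, hz, hth1⟩ : ∃ z : Fin M → F, VRel a b y z ∧
      ∀ i, vF (z i) = (th0 (f i) : WithTop ℤ) := by
    refine ⟨_, VRel.unip a b y (fun i => if th0 (f i) < th0 i then 1 else 0) f ?_ ?_ ?_, ?_⟩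
    · intro i
      split_ifs
      · exact one_mem _
      · exact zero_mem _
    · intro i
      split_ifs
      · rw [mul_one]
        refine mem_OS.2 (mem_Oint.2 ?_)
        rw [vF_tpow]
        have := ha (hf i)
        exact_mod_cast sub_nonneg.2 this
      · rw [mul_zero]; exact zero_mem _
    · left
      intro i hi
      refine lt_of_le_of_ne (hf i) ?_
      intro he
      rw [← he] at hi
      simp at hi
    · intro i
      split_ifs with h
      · rw [one_mul, AddValuation.map_add_eq_of_lt_right, hth0]
        rw [hth0, hth0]; exact_mod_cast h
      · rw [zero_mul, add_zero, hth0, le_antisymm (not_lt.1 h) (hfmin i i le_rfl)]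
  set th1 := fun i => th0 (f i) with hth1d
  have hth1m : Monotone th1 := fun i j hij => hfmin i (f j) (hij.trans (hf j))
  -- step B
  have hB : ∀ i, ∃ j, j ≤ i ∧ ∀ k, k ≤ i → th1 j - a j ≤ th1 k - a k := by
    intro i
    obtain ⟨j, hj, hmin⟩ := Finset.exists_min_image (Finset.univ.filter fun j => j ≤ i)
      (fun j => th1 j - a j) ⟨i, by simp⟩
    simp only [Finset.mem_filter, Finset.mem_univ, true_and] at hj hmin
    exact ⟨j, hj, hmin⟩
  choose q hq hqmin using hB
  obtain ⟨w, hw, hth2⟩ : ∃ w : Fin M → F, VRel a b z w ∧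
      ∀ i, vF (w i) = ((th1 (q i) - a (q i) + a i : ℤ) : WithTop ℤ) := by
    refine ⟨_, VRel.unip a b z (fun i => if th1 (q i) - a (q i) + a i < th1 i
      then tpow (a i - a (q i)) else 0) q ?_ ?_ ?_, ?_⟩
    · intro i
      split_ifs
      · refine mem_OS.2 (mem_Oint.2 ?_)
        rw [vF_tpow]
        have := ha (hq i)
        exact_mod_cast sub_nonneg.2 this
      · exact zero_mem _
    · intro i
      split_ifs
      · rw [← tpow_add]
        simp only [sub_add_sub_cancel, sub_self, tpow_zero]
        exact one_mem _
      · rw [mul_zero]; exact zero_mem _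
    · right
      intro i hi
      refine lt_of_le_of_ne (hq i) ?_
      intro he
      rw [he] at hi
      simp at hi
    · intro i
      split_ifs with h
      · have h3 : vF (tpow (a i - a (q i)) * z (q i))
            = ((th1 (q i) - a (q i) + a i : ℤ) : WithTop ℤ) := by
          rw [AddValuation.map_mul, vF_tpow, hth1]
          norm_cast
          change a i - a (q i) + th1 (q i) = _
          ring
        rw [AddValuation.map_add_eq_of_lt_right, h3]
        rw [h3, hth1]; exact_mod_cast h
      · rw [zero_mul, add_zero, hth1]
        have := hqmin i i le_rfl
        norm_cast
        change th1 i = _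
        omega
  set th2 := fun i => th1 (q i) - a (q i) + a i with hth2d
  have hne : ∀ i, w i ≠ 0 := by
    intro i h
    have := hth2 i
    rw [h, AddValuation.map_zero] at this
    exact WithTop.coe_ne_top this.symm
  choose k u hu hwk hk using fun i => exists_unit (hne i)
  have hk2 : ∀ i, k i = th2 i := by
    intro i
    have := (hk i).symm.trans (hth2 i)
    exact_mod_cast this
  refine ⟨th2, ?_, ?_, ?_, ?_⟩
  · intro i i' hii
    simp only [hth2d]
    rcases le_or_gt (q i') i with h | h
    · have := hqmin i _ h
      have := ha hii
      omega
    · have h1 := hqmin i i le_rfl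
      have h2 := hth1m h.le
      have h3 := ha (hq i')
      omega
  · intro i
    have h1 := hqmin i i le_rfl
    have h2 := hfmin i i le_rfl
    have h3 := hb i
    simp only [hth2d, hth1d] at *
    omega
  · intro i i' hii
    have := hqmin i' (q i) ((hq i).trans hii)
    simp only [hth2d]
    omega
  · have h4 := VRel.scale a b w u hu
    have h5 : (fun i => w i * (u i)⁻¹) = fun i => tpow (th2 i) := by
      ext1 i
      rw [← hk2, mul_inv_eq_iff_eq_mul₀ (unit_ne_zero (hu i))]
      exact hwk i
    rw [h5] at h4
    exact hy.trans (hz.trans (hw.trans h4))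

lemma exists_core {M : ℕ} (T : Matrix (Fin M) (Fin M) F) (hT : T.det ≠ 0) (b : ℤ)
    (x : Fin M → F) :
    ∃ (lam : Fin M → ℤ) (th : Fin (M + 1) → ℤ) (g c : Matrix (Fin M) (Fin M) F) (r : Fin M → F),
      Monotone lam ∧ Monotone th ∧ th (Fin.last M) = b ∧ InGLO g ∧ InGLO c ∧ (∀ i, r i ∈ OS) ∧
      g * T * c = Matrix.diagonal (fun i => tpow (lam i + th i.castSucc)) ∧
      ∀ i, (Matrix.vecMul x c) i + tpow b * r i = tpow (th i.castSucc) := by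
  obtain ⟨G, C, a, hG, hC, ha, hD⟩ := exists_smith T hT
  obtain ⟨th, hth, hb, hl, g, c, r, hg, hc, hr, hD', h⟩ :=
    exists_theta a ha b (Matrix.vecMul x C)
  refine ⟨fun i => a i - th i, Fin.snoc th b, g * G, C * c, r, hl, ?_, by simp, hg.mul hG,
    hC.mul hc, hr, ?_, ?_⟩
  · intro i j hij
    induction j using Fin.lastCases with
    | last =>
      induction i using Fin.lastCases with
      | last => exact le_rfl
      | cast i => simpa using hb i
    | cast j =>
      induction i using Fin.lastCases with
      | last => exact absurd hij (by simp [Fin.le_def])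
      | cast i =>
        simp only [Fin.snoc_castSucc]
        exact hth (by simpa using hij)
  · have : g * G * T * (C * c) = g * (G * T * C) * c := by simp only [Matrix.mul_assoc]
    rw [this, hD, hD']
    simp
  · intro i
    rw [← Matrix.vecMul_vecMul]
    simpa using h i

lemma sum_castLE {M n : ℕ} (hM : M ≤ n) (f : Fin n → F) (h : ∀ k : Fin n, M ≤ (k : ℕ) → f k = 0) :
    ∑ k, f k = ∑ k : Fin M, f (Fin.castLE hM k) := by
  symm
  refine Finset.sum_of_injOn (Fin.castLE hM) (Fin.castLE_injective hM).injOn (by simp) ?_ (by simp)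
  intro k _ hk
  refine h k ?_
  by_contra hlt
  exact hk ⟨⟨k, by omega⟩, by simp, by ext; simp⟩

lemma embTop_mul_of_lt {M n : ℕ} (hM : M ≤ n) (g : Matrix (Fin M) (Fin M) F)
    (X : Matrix (Fin n) (Fin n) F) (i : Fin M) (j : Fin n) :
    (embTop M n g * X) (Fin.castLE hM i) j = ∑ k : Fin M, g i k * X (Fin.castLE hM k) j := by
  rw [Matrix.mul_apply, sum_castLE hM]
  · refine Finset.sum_congr rfl fun k _ => ?_
    simp [embTop]
  · intro k hk
    simp [embTop, not_lt.2 hk]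

lemma embTop_mul_of_ge {M n : ℕ} (g : Matrix (Fin M) (Fin M) F)
    (X : Matrix (Fin n) (Fin n) F) (i j : Fin n) (hi : M ≤ (i : ℕ)) :
    (embTop M n g * X) i j = X i j := by
  rw [Matrix.mul_apply, Finset.sum_eq_single i]
  · simp [embTop, not_lt.2 hi]
  · intro k _ hk
    have : (i : ℕ) ≠ k := fun h => hk (Fin.ext h.symm)
    simp [embTop, not_lt.2 hi, this]
  · simp

lemma mul_embTop_of_lt {M n : ℕ} (hM : M ≤ n) (g : Matrix (Fin M) (Fin M) F)
    (X : Matrix (Fin n) (Fin n) F) (i : Fin n) (j : Fin M) :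
    (X * embTop M n g) i (Fin.castLE hM j) = ∑ k : Fin M, X i (Fin.castLE hM k) * g k j := by
  rw [Matrix.mul_apply, sum_castLE hM]
  · refine Finset.sum_congr rfl fun k _ => ?_
    simp [embTop]
  · intro k hk
    have : (k : ℕ) ≠ j := by omega
    simp [embTop, not_lt.2 hk, this]

lemma mul_embTop_of_ge {M n : ℕ} (g : Matrix (Fin M) (Fin M) F)
    (X : Matrix (Fin n) (Fin n) F) (i j : Fin n) (hj : M ≤ (j : ℕ)) :
    (X * embTop M n g) i j = X i j := by
  rw [Matrix.mul_apply, Finset.sum_eq_single j]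
  · simp [embTop, not_lt.2 hj]
  · intro k _ hk
    have : (k : ℕ) ≠ j := fun h => hk (Fin.ext h)
    simp [embTop, not_lt.2 hj, this]
  · simp

lemma embTop_one {M n : ℕ} : embTop M n 1 = 1 := by
  ext i j
  simp only [embTop, Matrix.one_apply, Fin.ext_iff]
  split_ifs <;> first | rfl | omega

lemma embTop_mul {M n : ℕ} (hM : M ≤ n) (g h : Matrix (Fin M) (Fin M) F) :
    embTop M n g * embTop M n h = embTop M n (g * h) := by
  ext i j
  by_cases hi : (i : ℕ) < M
  · obtain ⟨i, rfl⟩ : ∃ i' : Fin M, i = Fin.castLE hM i' := ⟨⟨i, hi⟩, rfl⟩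
    rw [embTop_mul_of_lt]
    by_cases hj : (j : ℕ) < M
    · simp [embTop, hj, Matrix.mul_apply]
    · simp [embTop, hj]
  · rw [embTop_mul_of_ge _ _ _ _ (by omega)]
    simp [embTop, hi]

lemma embTop_GLO {M n : ℕ} (hM : M ≤ n) {g : Matrix (Fin M) (Fin M) F} (hg : InGLO g) :
    InGLO (embTop M n g) := by
  have key : ∀ g : Matrix (Fin M) (Fin M) F, IntM g → IntM (embTop M n g) := by
    intro g hg i j
    unfold embTop
    split_ifs
    · exact hg _ _
    · exact zero_mem _
    · exact one_mem _
    · exact zero_mem _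
  obtain ⟨B, h1, h2, h3, h4⟩ := hg
  refine ⟨embTop M n B, key g h1, key B h2, ?_, ?_⟩
  · rw [embTop_mul hM, h3, embTop_one]
  · rw [embTop_mul hM, h4, embTop_one]

lemma Uminus_det {M n : ℕ} {u : Matrix (Fin n) (Fin n) F} (hu : InUminus M u) : u.det = 1 := by
  rw [Matrix.det_of_isLowerTriangular u
    (fun i j h => hu.2 i j (ne_of_lt h) (Or.inr (Fin.le_def.1 (le_of_lt h))))]
  simp [hu.1]

/-- Two matrices which agree in the first rows and have the same lower triangular shape
differ by an element of `U⁻`. -/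
lemma exists_Uminus {M n : ℕ} (X Y : Matrix (Fin n) (Fin n) F) (hX : X.det ≠ 0)
    (hrow : ∀ i j : Fin n, (i : ℕ) ≤ M → Y i j = X i j)
    (hX0 : ∀ i j : Fin n, i < j → M < (j : ℕ) → X i j = 0)
    (hY0 : ∀ i j : Fin n, i < j → M < (j : ℕ) → Y i j = 0)
    (hd : ∀ i : Fin n, M < (i : ℕ) → X i i ≠ 0)
    (hdd : ∀ i : Fin n, M < (i : ℕ) → Y i i = X i i) :
    ∃ u, InUminus M u ∧ u * X = Y := by
  have hu : IsUnit X.det := hX.isUnit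
  letI : Invertible X := Matrix.invertibleOfIsUnitDet X hu
  let b : Fin n → (ℕ)ᵒᵈ := fun i => OrderDual.toDual (max (i : ℕ) M)
  have hb : ∀ Z : Matrix (Fin n) (Fin n) F, (∀ i j : Fin n, i < j → M < (j : ℕ) → Z i j = 0) →
      Z.BlockTriangular b := by
    intro Z hZ i j hij
    have h : max (i : ℕ) M < max (j : ℕ) M := hij
    have h2 : M < (j : ℕ) := by omega
    have h3 : (i : ℕ) < j := by omega
    exact hZ i j h3 h2
  have hXi : X⁻¹.BlockTriangular b := Matrix.blockTriangular_inv_of_blockTriangular (hb X hX0)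
  have hbt : (Y * X⁻¹).BlockTriangular b := (hb Y hY0).mul hXi
  have hrow1 : ∀ i j : Fin n, (i : ℕ) ≤ M → (Y * X⁻¹) i j = (1 : Matrix (Fin n) (Fin n) F) i j := by
    intro i j hi
    rw [← Matrix.mul_nonsing_inv X hu, Matrix.mul_apply, Matrix.mul_apply]
    refine Finset.sum_congr rfl fun k _ => ?_
    rw [hrow i k hi]
  have hmul : Y * X⁻¹ * X = Y := by
    rw [Matrix.mul_assoc, Matrix.nonsing_inv_mul X hu, Matrix.mul_one]
  have hlow : ∀ i j : Fin n, M < (i : ℕ) → i < j → (Y * X⁻¹) i j = 0 := by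
    intro i j hi hij
    have hij' : (i : ℕ) < j := hij
    refine hbt ?_
    change max (i : ℕ) M < max (j : ℕ) M
    omega
  refine ⟨Y * X⁻¹, ⟨?_, ?_⟩, hmul⟩
  · intro i
    by_cases hi : (i : ℕ) ≤ M
    · rw [hrow1 i i hi, Matrix.one_apply_eq]
    · rw [not_le] at hi
      have h1 : (Y * X⁻¹ * X) i i = (Y * X⁻¹) i i * X i i := by
        rw [Matrix.mul_apply, Finset.sum_eq_single i]
        · intro k _ hk
          rcases lt_or_gt_of_ne hk with h | h
          · rw [hX0 k i h hi, mul_zero]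
          · rw [hlow i k hi h, zero_mul]
        · simp
      rw [hmul, hdd i hi] at h1
      exact (mul_eq_right₀ (hd i hi)).1 h1.symm
  · intro i j hij h
    by_cases hi : (i : ℕ) ≤ M
    · rw [hrow1 i j hi, Matrix.one_apply_ne hij]
    · have h2 : (i : ℕ) ≠ j := fun h => hij (Fin.ext h)
      exact hlow i j (by omega) (by rw [Fin.lt_def]; omega)

lemma Lmat_lt {M K : ℕ} (hM : M ≤ M + 1 + K) (lam : Fin M → ℤ) (th : Fin (M + 1) → ℤ)
    (th' : Fin K → ℤ) (i : Fin M) (j : Fin (M + 1 + K)) :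
    LmatN M K lam th th' (Fin.castLE hM i) j =
      if (i : ℕ) = j then tpow (lam i + th i.castSucc) else 0 := by
  have : (i : ℕ) < M := i.2
  simp only [LmatN, Fin.val_castLE, this, dif_pos]
  rfl

lemma Lmat_gt {M K : ℕ} (lam : Fin M → ℤ) (th : Fin (M + 1) → ℤ)
    (th' : Fin K → ℤ) (i : Fin K) (j : Fin (M + 1 + K)) :
    LmatN M K lam th th' (Fin.natAdd (M + 1) i) j =
      if M + 1 + (i : ℕ) = j then tpow (th' i) else 0 := by
  have h1 : ¬ (M + 1 + (i : ℕ) < M) := by omega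
  have h2 : ¬ (M + 1 + (i : ℕ) = M) := by omega
  simp [LmatN, h1, h2]

lemma Lmat_eq {M K : ℕ} (lam : Fin M → ℤ) (th : Fin (M + 1) → ℤ)
    (th' : Fin K → ℤ) (j : Fin (M + 1 + K)) (hM : M < M + 1 + K) :
    LmatN M K lam th th' ⟨M, hM⟩ j =
      if hj : (j : ℕ) < M + 1 then tpow (th ⟨j, hj⟩) else 0 := by
  simp [LmatN]

lemma row_cases {M K : ℕ} {p : Fin (M + 1 + K) → Prop} (hM : M ≤ M + 1 + K) (hM' : M < M + 1 + K)
    (h1 : ∀ i : Fin M, p (Fin.castLE hM i)) (h2 : p ⟨M, hM'⟩)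
    (h3 : ∀ i : Fin K, p (Fin.natAdd (M + 1) i)) : ∀ i, p i := by
  intro i
  rcases lt_trichotomy (i : ℕ) M with h | h | h
  · exact h1 ⟨i, h⟩
  · have : i = ⟨M, hM'⟩ := Fin.ext h
    rw [this]; exact h2
  · have : i = Fin.natAdd (M + 1) ⟨i - (M + 1), by omega⟩ := by
      ext; simp; omega
    rw [this]; exact h3 _

lemma Lmat_lower {M K : ℕ} (lam : Fin M → ℤ) (th : Fin (M + 1) → ℤ)
    (th' : Fin K → ℤ) (i j : Fin (M + 1 + K)) (hij : i < j) :
    LmatN M K lam th th' i j = 0 := by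
  have hij' : (i : ℕ) < j := hij
  unfold LmatN
  split_ifs <;> first | rfl | omega

lemma exists_rep (M K : ℕ) (A : Matrix (Fin (M + 1 + K)) (Fin (M + 1 + K)) F)
    (hA : IsUnit A.det) :
    ∃ (lam : Fin M → ℤ) (th : Fin (M + 1) → ℤ) (th' : Fin K → ℤ),
      Monotone lam ∧ Monotone th ∧
      ∃ (g : Matrix (Fin M) (Fin M) F)
        (u C : Matrix (Fin (M + 1 + K)) (Fin (M + 1 + K)) F),
        InGLO g ∧ InUminus M u ∧ InGLO C ∧
          embTop M (M + 1 + K) g * u * A * C = LmatN M K lam th th' := by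
  have hM : M ≤ M + 1 + K := by omega
  have hM' : M < M + 1 + K := by omega
  -- lower triangular form
  obtain ⟨B0, C0, k, hC0, hB0, hlow, hdiag⟩ :
      ∃ (B0 C0 : Matrix (Fin (M + 1 + K)) (Fin (M + 1 + K)) F) (k : Fin (M + 1 + K) → ℤ),
        InGLO C0 ∧ A * C0 = B0 ∧ (∀ i j, i < j → B0 i j = 0) ∧ ∀ i, B0 i i = tpow (k i) := by
    obtain ⟨C, hC, h⟩ := exists_lower A (M + 1 + K)
    have hl : ∀ i j, i < j → (A * C) i j = 0 := fun i j => h i j i.2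
    have hdet : (A * C).det ≠ 0 := by
      rw [Matrix.det_mul]
      exact mul_ne_zero hA.ne_zero (unit_ne_zero (InGLO_iff.1 hC).2)
    rw [Matrix.det_of_isLowerTriangular _ (fun i j h => hl i j h), Finset.prod_ne_zero_iff] at hdet
    choose k u hu hk _ using fun i => exists_unit (hdet i (Finset.mem_univ _))
    refine ⟨_, C * Matrix.diagonal fun i => (u i)⁻¹, k,
      hC.mul (InGLO.diag fun i => vF_inv_unit (hu i)), rfl, ?_, ?_⟩
    · intro i j hij
      rw [← Matrix.mul_assoc, Matrix.mul_diagonal, hl i j hij, zero_mul]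
    · intro i
      rw [← Matrix.mul_assoc, Matrix.mul_diagonal, hk i, mul_assoc,
        mul_inv_cancel₀ (unit_ne_zero (hu i)), mul_one]
  set Mi : Fin (M + 1 + K) := ⟨M, hM'⟩ with hMi
  set T : Matrix (Fin M) (Fin M) F := B0.submatrix (Fin.castLE hM) (Fin.castLE hM) with hT
  have hTdet : T.det ≠ 0 := by
    rw [Matrix.det_of_isLowerTriangular T (fun i j h => hlow (Fin.castLE hM i) (Fin.castLE hM j) h), Finset.prod_ne_zero_iff]
    intro i _
    rw [hT, Matrix.submatrix_apply, hdiag]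
    exact tpow_ne_zero _
  obtain ⟨lam, th, g, c, r, hlam, hth, hlast, hg, hc, hr, hD, hx⟩ :=
    exists_core T hTdet (k Mi) (fun j => B0 Mi (Fin.castLE hM j))
  set r' : Fin (M + 1 + K) → F := fun j => if h : (j : ℕ) < M then r ⟨j, h⟩ else 0 with hr'
  set R : Matrix (Fin (M + 1 + K)) (Fin (M + 1 + K)) F :=
    1 + Matrix.vecMulVec (Pi.single Mi 1) r' with hRdef
  have hRe : ∀ i j, R i j = (1 : Matrix (Fin (M + 1 + K)) (Fin (M + 1 + K)) F) i j +
      if i = Mi then r' j else 0 := by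
    intro i j
    rw [hRdef, Matrix.add_apply, Matrix.vecMulVec_apply, Pi.single_apply]
    split_ifs <;> simp
  have hr0 : ∀ j : Fin (M + 1 + K), M ≤ (j : ℕ) → r' j = 0 := by
    intro j hj
    rw [hr']; exact dif_neg (not_lt.2 hj)
  have hR : InGLO R := by
    refine InGLO.lower ?_ ?_ ?_
    · intro i j
      rw [hRe]
      refine add_mem ((InGLO_iff.1 InGLO.one).1 _ _) ?_
      split_ifs
      · rw [hr']
        dsimp only
        split_ifs
        · exact hr _
        · exact zero_mem _
      · exact zero_mem _
    · intro i j hij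
      rw [hRe, Matrix.one_apply_ne hij.ne, zero_add]
      split_ifs with h
      · exact hr0 j (by rw [h] at hij; exact le_of_lt hij)
      · rfl
    · intro i
      rw [hRe, Matrix.one_apply_eq]
      split_ifs with h
      · rw [hr0 i (by rw [h]), add_zero]
      · rw [add_zero]
  have hmulR : ∀ (Z : Matrix (Fin (M + 1 + K)) (Fin (M + 1 + K)) F) (i j : Fin (M + 1 + K)),
      (Z * R) i j = Z i j + Z i Mi * r' j := by
    intro Z i j
    rw [hRdef, Matrix.mul_add, Matrix.mul_one, Matrix.add_apply, Matrix.mul_vecMulVec,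
      Matrix.vecMulVec_apply]
    simp
  set E := embTop M (M + 1 + K) c with hE
  set X := B0 * E * R with hXdef
  have hXge : ∀ i j : Fin (M + 1 + K), M ≤ (j : ℕ) → X i j = B0 i j := by
    intro i j hj
    rw [hXdef, hmulR, hr0 j hj, mul_zero, add_zero, hE, mul_embTop_of_ge _ _ _ _ hj]
  have hXlt : ∀ (i : Fin (M + 1 + K)) (j : Fin M), X i (Fin.castLE hM j) =
      ∑ l : Fin M, B0 i (Fin.castLE hM l) * c l j + B0 i Mi * r j := by
    intro i j
    rw [hXdef, hmulR, hE, mul_embTop_of_lt, mul_embTop_of_ge _ _ _ _ (le_refl M)]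
    congr 2
    simp [hr']
  set th' : Fin K → ℤ := fun i => k (Fin.natAdd (M + 1) i) with hth'
  set L := LmatN M K lam th th' with hL
  have hXdet : X.det ≠ 0 := by
    rw [hXdef, ← hB0, Matrix.det_mul, Matrix.det_mul, Matrix.det_mul]
    exact mul_ne_zero (mul_ne_zero (mul_ne_zero hA.ne_zero (unit_ne_zero (InGLO_iff.1 hC0).2))
      (unit_ne_zero (InGLO_iff.1 (embTop_GLO hM hc)).2)) (unit_ne_zero (InGLO_iff.1 hR).2)
  have hgX : ∀ i j : Fin (M + 1 + K), (i : ℕ) ≤ M →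
      (embTop M (M + 1 + K) g * X) i j = L i j := by
    intro i j hi
    rcases lt_or_eq_of_le hi with hi | hi
    · obtain ⟨i, rfl⟩ : ∃ i' : Fin M, i = Fin.castLE hM i' := ⟨⟨i, hi⟩, rfl⟩
      rw [embTop_mul_of_lt, hL, Lmat_lt]
      by_cases hj : (j : ℕ) < M
      · obtain ⟨j, rfl⟩ : ∃ j' : Fin M, j = Fin.castLE hM j' := ⟨⟨j, hj⟩, rfl⟩
        have h1 : ∀ l : Fin M, X (Fin.castLE hM l) (Fin.castLE hM j) = (T * c) l j := by
          intro l
          rw [hXlt, hlow _ Mi l.2, zero_mul, add_zero, Matrix.mul_apply]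
          rfl
        simp only [h1]
        rw [← Matrix.mul_apply, ← Matrix.mul_assoc, hD, Matrix.diagonal_apply]
        simp [Fin.ext_iff]
      · rw [if_neg (by omega)]
        refine Finset.sum_eq_zero fun l _ => ?_
        rw [hXge _ _ (by omega), hlow, mul_zero]
        rw [Fin.lt_def]; simp; omega
    · obtain rfl : i = Mi := Fin.ext hi
      rw [embTop_mul_of_ge _ _ _ _ (le_refl M), hL, Lmat_eq]
      rcases lt_trichotomy (j : ℕ) M with hj | hj | hj
      · obtain ⟨j, rfl⟩ : ∃ j' : Fin M, j = Fin.castLE hM j' := ⟨⟨j, hj⟩, rfl⟩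
        rw [hXlt, dif_pos (by simp), hdiag]
        exact hx j
      · obtain rfl : j = Mi := Fin.ext hj
        rw [hXge _ _ (le_refl M), hdiag, dif_pos (by simp [hMi]), ← hlast]
        rfl
      · rw [hXge _ _ hj.le, hlow _ _ hj, dif_neg (by omega)]
  obtain ⟨gi, hgi, hg1, hg2⟩ := hg.inv
  obtain ⟨u, hu, huX⟩ := exists_Uminus (M := M) X (embTop M (M + 1 + K) gi * L) hXdet
    (by
      intro i j hi
      have h1 : embTop M (M + 1 + K) gi * (embTop M (M + 1 + K) g * X) = X := by
        rw [← Matrix.mul_assoc, embTop_mul hM, hg2, embTop_one, Matrix.one_mul]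
      rw [← congrFun (congrFun h1 i) j]
      rcases lt_or_eq_of_le hi with hi' | hi'
      · obtain ⟨i, rfl⟩ : ∃ i' : Fin M, i = Fin.castLE hM i' := ⟨⟨i, hi'⟩, rfl⟩
        rw [embTop_mul_of_lt, embTop_mul_of_lt]
        refine Finset.sum_congr rfl fun l _ => ?_
        rw [hgX _ _ (by simp)]
      · rw [embTop_mul_of_ge _ _ _ _ hi'.ge, embTop_mul_of_ge _ _ _ _ hi'.ge, hgX _ _ hi])
    (by
      intro i j hij hj
      rw [hXge _ _ hj.le, hlow _ _ hij])
    (by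
      intro i j hij hj
      by_cases hi' : (i : ℕ) < M
      · obtain ⟨i, rfl⟩ : ∃ i' : Fin M, i = Fin.castLE hM i' := ⟨⟨i, hi'⟩, rfl⟩
        rw [embTop_mul_of_lt]
        refine Finset.sum_eq_zero fun l _ => ?_
        rw [hL, Lmat_lower, mul_zero]
        rw [Fin.lt_def]; simp; omega
      · rw [embTop_mul_of_ge _ _ _ _ (by omega), hL, Lmat_lower _ _ _ _ _ hij])
    (by
      intro i hi
      rw [hXge _ _ hi.le, hdiag]
      exact tpow_ne_zero _)
    (by
      intro i hi
      rw [hXge _ _ hi.le, hdiag, embTop_mul_of_ge _ _ _ _ hi.le]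
      obtain ⟨i, rfl⟩ : ∃ i' : Fin K, i = Fin.natAdd (M + 1) i' :=
        ⟨⟨i - (M + 1), by omega⟩, by ext; simp; omega⟩
      rw [hL, Lmat_gt]
      simp [hth'])
  refine ⟨lam, th, th', hlam, hth, g, u, C0 * (E * R), hg, hu,
    hC0.mul ((embTop_GLO hM hc).mul hR), ?_⟩
  have h2 : embTop M (M + 1 + K) g * u * A * (C0 * (E * R)) =
      embTop M (M + 1 + K) g * (u * X) := by
    rw [hXdef, ← hB0]; simp only [Matrix.mul_assoc]
  rw [h2, huX, ← Matrix.mul_assoc, embTop_mul hM, hg1, embTop_one, Matrix.one_mul]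

lemma tpow_le {p q : ℤ} {d : F} (hd : d ∈ OS) (h : tpow p = tpow q * d) : q ≤ p := by
  have h1 := congrArg vF h
  have h2 := mem_Oint.1 (mem_OS.1 hd)
  rw [AddValuation.map_mul, vF_tpow, vF_tpow] at h1
  cases hz : vF d with
  | top => rw [hz] at h1; simp at h1
  | coe m =>
    rw [hz] at h1 h2
    norm_cast at h1 h2
    omega

/-- Uniqueness of the Smith normal form, one-sided version. -/
lemma smith_le {M : ℕ} (γ D : Matrix (Fin M) (Fin M) F) (hγ : InGLO γ) (hD : IntM D)
    (a1 a2 : Fin M → ℤ) (h1 : Monotone a1) (h2 : Monotone a2)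
    (h : ∀ i j, γ i j * tpow (a1 j) = tpow (a2 i) * D i j) (k : Fin M) : a2 k ≤ a1 k := by
  by_contra hlt
  rw [not_le] at hlt
  obtain ⟨hγ1, hγ2⟩ := InGLO_iff.1 hγ
  have hpos : ∀ i j, k ≤ i → j ≤ k → 0 < vF (γ i j) := by
    intro i j hi hj
    have e := congrArg vF (h i j)
    have hd := mem_Oint.1 (mem_OS.1 (hD i j))
    rw [AddValuation.map_mul, AddValuation.map_mul, vF_tpow, vF_tpow] at e
    have := h1 hj
    have := h2 hi
    cases hz : vF (γ i j) with
    | top => simp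
    | coe m =>
      rw [hz] at e
      cases hy : vF (D i j) with
      | top => rw [hy] at e; simp at e
      | coe l =>
        rw [hy] at e hd
        norm_cast at e hd ⊢
        omega
  have : 0 < vF γ.det := by
    rw [Matrix.det_apply]
    refine AddValuation.map_lt_sum vF (by simp) fun σ _ => ?_
    obtain ⟨j, hj, hσ⟩ : ∃ j, j ≤ k ∧ k ≤ σ j := by
      by_contra hcon
      push Not at hcon
      have hc : (Finset.Iic k).card ≤ (Finset.Iio k).card :=
        Finset.card_le_card_of_injOn σ (fun j hj => by
          simpa using hcon j (by simpa using hj)) σ.injective.injOn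
      simp at hc
    have hv : vF (∏ i, γ (σ i) i) > 0 := by
      rw [← Finset.mul_prod_erase _ _ (Finset.mem_univ j), AddValuation.map_mul]
      refine add_pos_of_pos_of_nonneg (hpos _ _ hσ hj) ?_
      exact mem_Oint.1 (mem_OS.1 (Subring.prod_mem _ fun i _ => hγ1 _ _))
    rcases Int.units_eq_one_or (Equiv.Perm.sign σ) with h | h
    · rw [h, one_smul]; exact hv
    · rw [h, Units.neg_smul, one_smul, AddValuation.map_neg]; exact hv
  rw [hγ2] at this
  exact lt_irrefl _ this

lemma oneside {M K : ℕ} (lam1 lam2 : Fin M → ℤ) (th1 th2 : Fin (M + 1) → ℤ)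
    (th1' th2' : Fin K → ℤ) (hl1 : Monotone lam1) (hl2 : Monotone lam2)
    (ht1 : Monotone th1) (ht2 : Monotone th2)
    (γ : Matrix (Fin M) (Fin M) F) (u D : Matrix (Fin (M + 1 + K)) (Fin (M + 1 + K)) F)
    (hγ : InGLO γ) (hu : InUminus M u) (hD : IntM D)
    (h : u * (embTop M (M + 1 + K) γ * LmatN M K lam1 th1 th1') = LmatN M K lam2 th2 th2' * D) :
    (∀ i, th2' i ≤ th1' i) ∧ th2 (Fin.last M) ≤ th1 (Fin.last M) ∧
    (∀ i : Fin M, lam2 i + th2 i.castSucc ≤ lam1 i + th1 i.castSucc) ∧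
    ((∀ i : Fin M, lam2 i + th2 i.castSucc = lam1 i + th1 i.castSucc) →
      ∀ i : Fin M, th2 i.castSucc ≤ th1 i.castSucc) := by
  have hM : M ≤ M + 1 + K := by omega
  have hM' : M < M + 1 + K := by omega
  set L1 := LmatN M K lam1 th1 th1' with hL1
  set L2 := LmatN M K lam2 th2 th2' with hL2
  set Mi : Fin (M + 1 + K) := ⟨M, hM'⟩ with hMi
  -- rows `≤ M` are not changed by `u`
  have hu1 : ∀ (Z : Matrix (Fin (M + 1 + K)) (Fin (M + 1 + K)) F) (i j : Fin (M + 1 + K)),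
      (i : ℕ) ≤ M → (u * Z) i j = Z i j := by
    intro Z i j hi
    rw [Matrix.mul_apply, Finset.sum_eq_single i]
    · rw [hu.1, one_mul]
    · intro k _ hk
      rw [hu.2 i k hk.symm (Or.inl hi), zero_mul]
    · simp
  have hlt : ∀ (i : Fin M) (j : Fin (M + 1 + K)),
      ∑ l : Fin M, γ i l * L1 (Fin.castLE hM l) j =
        tpow (lam2 i + th2 i.castSucc) * D (Fin.castLE hM i) j := by
    intro i j
    have e := congrFun (congrFun h (Fin.castLE hM i)) j
    rw [hu1 _ _ _ (by simp), embTop_mul_of_lt, Matrix.mul_apply,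
      Finset.sum_eq_single (Fin.castLE hM i)] at e
    · rw [e, hL2, Lmat_lt]; simp
    · intro k _ hk
      rw [hL2, Lmat_lt, if_neg, zero_mul]
      intro hh
      exact hk (Fin.ext hh.symm)
    · simp
  have hlt' : ∀ i j : Fin M, γ i j * tpow (lam1 j + th1 j.castSucc) =
      tpow (lam2 i + th2 i.castSucc) * D (Fin.castLE hM i) (Fin.castLE hM j) := by
    intro i j
    rw [← hlt, Finset.sum_eq_single j]
    · rw [hL1, Lmat_lt]; simp
    · intro k _ hk
      rw [hL1, Lmat_lt, if_neg, mul_zero]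
      intro hh
      exact hk (Fin.ext hh)
    · simp
  have hDM : ∀ i : Fin M, D (Fin.castLE hM i) Mi = 0 := by
    intro i
    have e := hlt i Mi
    rw [Finset.sum_eq_zero] at e
    · exact (mul_eq_zero.1 e.symm).resolve_left (tpow_ne_zero _)
    · intro l _
      rw [hL1, Lmat_lower _ _ _ _ _ l.2, mul_zero]
  have hrowM : ∀ j, L1 Mi j = ∑ l, L2 Mi l * D l j := by
    intro j
    rw [← Matrix.mul_apply, ← h, hu1 _ _ _ (le_refl M), embTop_mul_of_ge _ _ _ _ (le_refl M)]
  refine ⟨?_, ?_, ?_, ?_⟩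
  · intro i
    set I := Fin.natAdd (M + 1) i with hI
    have hIv : (I : ℕ) = M + 1 + i := by simp [hI]
    have e := congrFun (congrFun h I) I
    rw [Matrix.mul_apply, Matrix.mul_apply, Finset.sum_eq_single I, Finset.sum_eq_single I,
      embTop_mul_of_ge _ _ _ _ (by omega), hu.1, one_mul, hL1, hL2, hI, Lmat_gt, Lmat_gt] at e
    · simp only [Fin.val_natAdd, if_true] at e
      exact tpow_le (hD _ _) e
    · intro k _ hk
      rw [hL2, hI, Lmat_gt, if_neg, zero_mul]
      intro hh
      exact hk (Fin.ext (by rw [hIv, hh]))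
    · simp
    · intro k _ hk
      rcases lt_or_gt_of_ne hk with hk | hk
      · by_cases hkM : (k : ℕ) < M
        · obtain ⟨k, rfl⟩ : ∃ k' : Fin M, k = Fin.castLE hM k' := ⟨⟨k, hkM⟩, rfl⟩
          rw [embTop_mul_of_lt, Finset.sum_eq_zero, mul_zero]
          intro l _
          rw [hL1, Lmat_lower, mul_zero]
          rw [Fin.lt_def, hIv]; simp; omega
        · rw [embTop_mul_of_ge _ _ _ _ (by omega), hL1, Lmat_lower _ _ _ _ _ hk, mul_zero]
      · rw [hu.2 I k (ne_of_lt hk) (Or.inr (le_of_lt hk)), zero_mul]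
    · simp
  · have e := hrowM Mi
    rw [Finset.sum_eq_single Mi] at e
    · rw [hL1, hL2, Lmat_eq, Lmat_eq, dif_pos (by simp [hMi]), dif_pos (by simp [hMi])] at e
      exact tpow_le (hD _ _) e
    · intro k _ hk
      rcases lt_or_gt_of_ne hk with hk | hk
      · obtain ⟨k, rfl⟩ : ∃ k' : Fin M, k = Fin.castLE hM k' := ⟨⟨k, hk⟩, rfl⟩
        rw [hDM, mul_zero]
      · rw [hL2, Lmat_lower _ _ _ _ _ hk, zero_mul]
    · simp
  · refine smith_le γ (D.submatrix (Fin.castLE hM) (Fin.castLE hM)) hγ (fun i j => hD _ _)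
      (fun i => lam1 i + th1 i.castSucc) (fun i => lam2 i + th2 i.castSucc) ?_ ?_ hlt'
    · exact fun i j hij => add_le_add (hl1 hij) (ht1 (by simpa using hij))
    · exact fun i j hij => add_le_add (hl2 hij) (ht2 (by simpa using hij))
  · intro ha j
    have e := hrowM (Fin.castLE hM j)
    rw [hL1, Lmat_eq, dif_pos (by simp)] at e
    have hv : ((th2 j.castSucc : ℤ) : WithTop ℤ) ≤
        vF (∑ l, L2 Mi l * D l (Fin.castLE hM j)) := by
      refine AddValuation.map_le_sum vF fun l _ => ?_
      rw [AddValuation.map_mul, hL2, Lmat_eq]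
      have hd0 := mem_Oint.1 (mem_OS.1 (hD l (Fin.castLE hM j)))
      split_ifs with hl
      · rw [vF_tpow]
        by_cases hjl : (j : ℕ) ≤ l
        · have h3 : th2 j.castSucc ≤ th2 ⟨l, hl⟩ := ht2 (by rw [Fin.le_def]; simpa using hjl)
          calc ((th2 j.castSucc : ℤ) : WithTop ℤ) ≤ (th2 ⟨l, hl⟩ : ℤ) := by exact_mod_cast h3
            _ ≤ _ := le_add_of_nonneg_right hd0
        · obtain ⟨l, rfl⟩ : ∃ l' : Fin M, l = Fin.castLE hM l' := ⟨⟨l, by omega⟩, rfl⟩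
          have hjl' : l ≤ j := by rw [Fin.le_def]; simp at hjl; omega
          have e2 := congrArg vF (hlt' l j)
          have hg0 := mem_Oint.1 (mem_OS.1 ((InGLO_iff.1 hγ).1 l j))
          rw [AddValuation.map_mul, AddValuation.map_mul, vF_tpow, vF_tpow, ← ha j] at e2
          have hth : th2 ⟨((Fin.castLE hM l : Fin (M + 1 + K)) : ℕ), hl⟩ = th2 l.castSucc := rfl
          rw [hth]
          have hm := hl2 hjl'
          cases hz : vF (D (Fin.castLE hM l) (Fin.castLE hM j)) with
          | top => simp
          | coe m =>
            rw [hz] at e2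
            cases hy : vF (γ l j) with
            | top => rw [hy] at e2; simp at e2; exact absurd e2.symm (by exact WithTop.coe_ne_top)
            | coe n =>
              rw [hy] at e2 hg0
              norm_cast at e2 hg0 ⊢
              omega
      · simp
    rw [← e, vF_tpow] at hv
    exact_mod_cast hv

lemma transfer {M K : ℕ} (A L1 L2 : Matrix (Fin (M + 1 + K)) (Fin (M + 1 + K)) F)
    (g1 g2 : Matrix (Fin M) (Fin M) F) (u1 u2 C1 C2 : Matrix (Fin (M + 1 + K)) (Fin (M + 1 + K)) F)
    (hg1 : InGLO g1) (hg2 : InGLO g2) (hu1 : InUminus M u1) (hu2 : InUminus M u2)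
    (hC1 : InGLO C1) (hC2 : InGLO C2)
    (h1 : embTop M (M + 1 + K) g1 * u1 * A * C1 = L1)
    (h2 : embTop M (M + 1 + K) g2 * u2 * A * C2 = L2) :
    ∃ γ u D, InGLO γ ∧ InUminus M u ∧ IntM D ∧
      u * (embTop M (M + 1 + K) γ * L1) = L2 * D := by
  have hM : M ≤ M + 1 + K := by omega
  obtain ⟨gi, hgi, hgi1, hgi2⟩ := hg1.inv
  obtain ⟨Ci, hCi, hCi1, hCi2⟩ := hC2.inv
  set E := embTop M (M + 1 + K) with hE
  have hX : E (g2 * gi) * (E g1 * u1) = E g2 * u1 := by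
    rw [← Matrix.mul_assoc, hE, embTop_mul hM, Matrix.mul_assoc g2, hgi2, Matrix.mul_one]
  have hrow : ∀ (v : Matrix (Fin (M + 1 + K)) (Fin (M + 1 + K)) F), InUminus M v →
      ∀ i j : Fin (M + 1 + K), (i : ℕ) ≤ M → v i j = (1 : Matrix _ _ F) i j := by
    intro v hv i j hi
    by_cases hij : i = j
    · subst hij; rw [hv.1, Matrix.one_apply_eq]
    · rw [hv.2 i j hij (Or.inl hi), Matrix.one_apply_ne hij]
  have hrow2 : ∀ (v : Matrix (Fin (M + 1 + K)) (Fin (M + 1 + K)) F), InUminus M v →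
      ∀ i j : Fin (M + 1 + K), (i : ℕ) ≤ M → (E g2 * v) i j = (E g2 * (1 : Matrix (Fin (M + 1 + K)) (Fin (M + 1 + K)) F)) i j := by
    intro v hv i j hi
    by_cases hi' : (i : ℕ) < M
    · obtain ⟨i, rfl⟩ : ∃ i' : Fin M, i = Fin.castLE hM i' := ⟨⟨i, hi'⟩, rfl⟩
      rw [hE, embTop_mul_of_lt, embTop_mul_of_lt]
      refine Finset.sum_congr rfl fun l _ => ?_
      rw [hrow v hv _ _ (by simp)]
    · have hi2 : M ≤ (i : ℕ) := by omega
      rw [hE, embTop_mul_of_ge _ _ _ _ hi2, embTop_mul_of_ge _ _ _ _ hi2,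
        hrow v hv _ _ hi]
  have hlow : ∀ (v : Matrix (Fin (M + 1 + K)) (Fin (M + 1 + K)) F), InUminus M v →
      ∀ i j : Fin (M + 1 + K), i < j → M < (j : ℕ) → (E g2 * v) i j = 0 := by
    intro v hv i j hij hj
    have hij' : (i : ℕ) < j := hij
    by_cases hi' : (i : ℕ) < M
    · obtain ⟨i, rfl⟩ : ∃ i' : Fin M, i = Fin.castLE hM i' := ⟨⟨i, hi'⟩, rfl⟩
      rw [hE, embTop_mul_of_lt]
      refine Finset.sum_eq_zero fun l _ => ?_
      rw [hv.2 _ _ _ (Or.inl (by simp)), mul_zero]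
      intro hh
      have := congrArg Fin.val hh
      simp at this
      omega
    · rw [hE, embTop_mul_of_ge _ _ _ _ (by omega), hv.2 _ _ hij.ne (Or.inr hij'.le)]
  have hdiag : ∀ (v : Matrix (Fin (M + 1 + K)) (Fin (M + 1 + K)) F), InUminus M v →
      ∀ i : Fin (M + 1 + K), M < (i : ℕ) → (E g2 * v) i i = 1 := by
    intro v hv i hi
    rw [hE, embTop_mul_of_ge _ _ _ _ hi.le, hv.1]
  obtain ⟨u, hu, huX⟩ := exists_Uminus (M := M) (E g2 * u1) (E g2 * u2)
    (by
      rw [Matrix.det_mul, Uminus_det hu1, mul_one]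
      exact unit_ne_zero (InGLO_iff.1 (embTop_GLO hM hg2)).2)
    (fun i j hi => by rw [hrow2 _ hu2 i j hi, hrow2 _ hu1 i j hi])
    (hlow _ hu1) (hlow _ hu2)
    (fun i hi => by rw [hdiag _ hu1 i hi]; exact one_ne_zero)
    (fun i hi => by rw [hdiag _ hu1 i hi, hdiag _ hu2 i hi])
  refine ⟨g2 * gi, u, Ci * C1, hg2.mul hgi, hu, (InGLO_iff.1 (hCi.mul hC1)).1, ?_⟩
  calc u * (E (g2 * gi) * L1) = u * (E (g2 * gi) * (E g1 * u1)) * A * C1 := by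
        rw [← h1]; simp only [Matrix.mul_assoc]
    _ = E g2 * u2 * A * C1 := by rw [hX, huX]
    _ = E g2 * u2 * A * (C2 * Ci) * C1 := by rw [hCi1, Matrix.mul_one]
    _ = L2 * (Ci * C1) := by rw [← h2]; simp only [Matrix.mul_assoc]

/-- Every `GL_M(O) ⋉ U⁻_{M,N}(F)`-orbit on `Gr_N = GL_N(F)/GL_N(O)`
(`N = M+1+K`, `M < N`) contains a representative of the form `L_{(λ,(θ,θ'))}` with `(λ,θ)`
a dominant weight of length `(M,M+1)` and `θ'` an arbitrary integer sequence of length `K`;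
moreover this representative is unique. -/
theorem stmt1 (M K : ℕ) (A : Matrix (Fin (M + 1 + K)) (Fin (M + 1 + K)) F)
    (hA : IsUnit A.det) :
    ∃! w : (Fin M → ℤ) × (Fin (M + 1) → ℤ) × (Fin K → ℤ),
      Monotone w.1 ∧ Monotone w.2.1 ∧
      ∃ (g : Matrix (Fin M) (Fin M) F)
        (u C : Matrix (Fin (M + 1 + K)) (Fin (M + 1 + K)) F),
        InGLO g ∧ InUminus M u ∧ InGLO C ∧
          embTop M (M + 1 + K) g * u * A * C = LmatN M K w.1 w.2.1 w.2.2 := by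
  obtain ⟨lam, th, th', hl, ht, g, u, C, hg, hu, hC, h⟩ := exists_rep M K A hA
  refine ⟨(lam, th, th'), ⟨hl, ht, g, u, C, hg, hu, hC, h⟩, ?_⟩
  rintro ⟨lam2, th2, th2'⟩ ⟨hl2, ht2, g2, u2, C2, hg2, hu2, hC2, h2⟩
  dsimp only at hl2 ht2 h2
  obtain ⟨γ, v, D, hγ, hv, hD, e⟩ := transfer A _ _ g g2 u u2 C C2 hg hg2 hu hu2 hC hC2 h h2
  obtain ⟨γ', v', D', hγ', hv', hD', e'⟩ := transfer A _ _ g2 g u2 u C2 C hg2 hg hu2 hu hC2 hC h2 h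
  obtain ⟨p1, p2, p3, p4⟩ := oneside _ _ _ _ _ _ hl hl2 ht ht2 γ v D hγ hv hD e
  obtain ⟨q1, q2, q3, q4⟩ := oneside _ _ _ _ _ _ hl2 hl ht2 ht γ' v' D' hγ' hv' hD' e'
  have ha := fun i => le_antisymm (p3 i) (q3 i)
  have hb := fun i => le_antisymm (p4 ha i) (q4 (fun i => (ha i).symm) i)
  refine Prod.ext ?_ (Prod.ext ?_ ?_)
  · funext i
    have h3 := ha i
    have h4 := hb i
    dsimp only
    omega
  · funext i
    induction i using Fin.lastCases with
    | last => exact le_antisymm p2 q2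
    | cast i => exact hb i
  · funext i
    exact le_antisymm (p1 i) (q1 i)
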